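/- There exists an absolute constant C ≥ 1 such that for all t ∈ ℝ and all Schwartz functions f : ℝ → ℂ: ‖ ⟨·⟩^{-2} ∂_x e^{±it⟨∇⟩} ( ⟨·⟩^{-2} f ) ‖_{L²(ℝ)} ≤ C ⟨t⟩^{-3/2} ( ‖f‖_{L²(ℝ)}² + ‖f'‖_{L²(ℝ)}² )^{1/2}. -/

import Mathlib

open MeasureTheory

/-- Fourier transform with the convention `ĥ(ξ) = (2π)^{-1/2} ∫ e^{-ixξ} h(x) dx`. -/
noncomputable def FT (h : ℝ → ℂ) (ξ : ℝ) : ℂ :=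
  (Real.sqrt (2 * Real.pi) : ℂ)⁻¹ * ∫ x : ℝ, Complex.exp (-(Complex.I * x * ξ)) * h x

/-- Inverse Fourier transform `(2π)^{-1/2} ∫ e^{+ixξ} h(ξ) dξ`. -/
noncomputable def IFT (h : ℝ → ℂ) (x : ℝ) : ℂ :=
  (Real.sqrt (2 * Real.pi) : ℂ)⁻¹ * ∫ ξ : ℝ, Complex.exp (Complex.I * x * ξ) * h ξ

/-- Japanese bracket `⟨x⟩ = (1+x²)^{1/2}`. -/
noncomputable def jap (x : ℝ) : ℝ := Real.sqrt (1 + x ^ 2)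

/-- Fourier multiplier operator with symbol `m`: `m(D)h = ℱ^{-1}(m(ξ) ĥ(ξ))`. -/
noncomputable def Mop (m : ℝ → ℂ) (h : ℝ → ℂ) : ℝ → ℂ :=
  IFT (fun ξ => m ξ * FT h ξ)

/-- The `L²(ℝ)` norm. -/
noncomputable def L2C (h : ℝ → ℂ) : ℝ := Real.sqrt (∫ x : ℝ, ‖h x‖ ^ 2)

open scoped SchwartzMap FourierTransform
open SchwartzMap Function

/-!
On the frequency side one has to bound `⟨x⟩⁻² ℱ⁻¹(iξ e^{is⟨ξ⟩} G)` in `L²`, where `s = ±t` and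
`G` is the transform of the data. Since `ξ e^{is⟨ξ⟩} = (is)⁻¹ ⟨ξ⟩ ∂_ξ e^{is⟨ξ⟩}`, one
integration by parts gains `|s|⁻¹`: the derivative falls either on `⟨ξ⟩G` or on the whole
product, where it becomes multiplication by `x` and costs one factor `⟨x⟩⁻¹`.

The remaining `⟨x⟩⁻¹ ℱ⁻¹(e^{is⟨ξ⟩} B)` with `B ∈ H¹` decays like `|s|^{-1/2}` by stationary
phase at `ξ = 0`: integrate by parts once more, with the reciprocal of `φ'(ξ) = ξ/⟨ξ⟩`
regularised at scale `ε = |s|^{-1/2}`. What is left is small in `L¹` for bounded `ξ`, because it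
lives where `|ξ| ≲ ε` and `B` is bounded, and small in `L²` for large `ξ`.

The operators `⟨x⟩⁻¹ ℱ⁻¹` are bounded from both `L¹` and `L²` to `L²`. The weight `⟨x⟩⁻²` on the
data makes `G`, `G'` and `G''` all square integrable against `⟨ξ⟩`, at the price of one
derivative of `f`.
-/

namespace KleinGordon

/-! ### The Japanese bracket -/

lemma jap_pos (x : ℝ) : 0 < jap x := Real.sqrt_pos.2 (by positivity)

lemma jap_sq (x : ℝ) : jap x ^ 2 = 1 + x ^ 2 := Real.sq_sqrt (by positivity)

lemma one_le_jap (x : ℝ) : 1 ≤ jap x := Real.one_le_sqrt.2 (by nlinarith [sq_nonneg x])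

lemma inv_jap_le_one (x : ℝ) : (jap x)⁻¹ ≤ 1 := inv_le_one_of_one_le₀ (one_le_jap x)

lemma abs_le_jap (x : ℝ) : |x| ≤ jap x := Real.abs_le_sqrt (by linarith)

lemma jap_le_one_add_abs (x : ℝ) : jap x ≤ 1 + |x| := by
  rw [jap, Real.sqrt_le_left (by positivity)]
  nlinarith [sq_abs x, abs_nonneg x]

lemma abs_div_jap_le_one (x : ℝ) : |x / jap x| ≤ 1 := by
  rw [abs_div, abs_of_pos (jap_pos x)]
  exact div_le_one_of_le₀ (abs_le_jap x) (jap_pos x).le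

lemma abs_inv_jap_pow_three_le_one (x : ℝ) : |(jap x ^ 3)⁻¹| ≤ 1 := by
  rw [abs_of_pos (inv_pos.2 (pow_pos (jap_pos x) 3))]
  exact inv_le_one_of_one_le₀ (one_le_pow₀ (one_le_jap x))

lemma jap_rpow_neg_two (x : ℝ) : jap x ^ (-(2 : ℝ)) = (1 + x ^ 2)⁻¹ := by
  rw [Real.rpow_neg (jap_pos x).le, Real.rpow_two, jap_sq]

lemma hasDerivAt_jap (x : ℝ) : HasDerivAt jap (x / jap x) x := by
  have h := ((hasDerivAt_pow 2 x).const_add 1).sqrt (by positivity)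
  refine h.congr_deriv ?_
  change _ = x / √(1 + x ^ 2)
  field_simp
  norm_num

lemma hasDerivAt_div_jap (x : ℝ) : HasDerivAt (fun y => y / jap y) (jap x ^ 3)⁻¹ x := by
  have hj := (jap_pos x).ne'
  refine ((hasDerivAt_id x).div (hasDerivAt_jap x) hj).congr_deriv ?_
  have := jap_sq x
  simp only [id]
  field_simp
  linarith

lemma hasDerivAt_inv_one_add_sq (x : ℝ) :
    HasDerivAt (fun y : ℝ => (1 + y ^ 2)⁻¹) (-(2 * x) / (1 + x ^ 2) ^ 2) x := by
  have h : HasDerivAt (fun y : ℝ => 1 + y ^ 2) (2 * x) x := by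
    simpa using (hasDerivAt_pow 2 x).const_add 1
  exact h.inv (by positivity)

/-! ### Symbols of temperate growth -/

@[fun_prop]
lemma hasTemperateGrowth_one_add_sq_rpow (r : ℝ) :
    (fun x : ℝ => (1 + x ^ 2) ^ r).HasTemperateGrowth := by
  simpa using hasTemperateGrowth_one_add_norm_sq_rpow ℝ r

@[fun_prop]
lemma hasTemperateGrowth_jap : jap.HasTemperateGrowth := by
  have h : jap = fun x => (1 + x ^ 2) ^ (1 / 2 : ℝ) := funext fun x => Real.sqrt_eq_rpow _
  rw [h]
  fun_prop

@[fun_prop]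
lemma hasTemperateGrowth_inv_jap : (fun x => (jap x)⁻¹).HasTemperateGrowth := by
  have h : (fun x => (jap x)⁻¹) = fun x : ℝ => (1 + x ^ 2) ^ (-(1 / 2) : ℝ) := by
    ext x
    rw [Real.rpow_neg (by positivity), jap, Real.sqrt_eq_rpow]
  rw [h]
  fun_prop

lemma hasTemperateGrowth_div_jap : (fun x => x / jap x).HasTemperateGrowth := by
  simp only [div_eq_mul_inv]
  fun_prop

@[fun_prop]
lemma hasTemperateGrowth_inv_one_add_sq : (fun x : ℝ => (1 + x ^ 2)⁻¹).HasTemperateGrowth := by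
  simpa only [Real.rpow_neg_one] using hasTemperateGrowth_one_add_sq_rpow (-1)

@[fun_prop]
lemma hasTemperateGrowth_ofReal {m : ℝ → ℝ} (hm : m.HasTemperateGrowth) :
    (fun x => (m x : ℂ)).HasTemperateGrowth :=
  Complex.hasTemperateGrowth_ofReal.comp hm

/-- The oscillatory factor `e^{isφ}`. -/
noncomputable def osc (φ : ℝ → ℝ) (s x : ℝ) : ℂ := Complex.exp (Complex.I * s * φ x)

lemma norm_osc (φ : ℝ → ℝ) (s x : ℝ) : ‖osc φ s x‖ = 1 := by
  rw [osc, show Complex.I * s * φ x = Complex.I * ((s * φ x : ℝ) : ℂ) by push_cast; ring,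
    Complex.norm_exp_I_mul_ofReal]

lemma hasDerivAt_osc {φ : ℝ → ℝ} {d x : ℝ} (hφ : HasDerivAt φ d x) (s : ℝ) :
    HasDerivAt (osc φ s) (Complex.I * s * d * osc φ s x) x :=
  (hφ.ofReal_comp.const_mul (Complex.I * s)).cexp.congr_deriv (mul_comm _ _)

lemma iteratedDeriv_osc_id (s : ℝ) (n : ℕ) :
    iteratedDeriv n (osc id s) = fun x => (Complex.I * s) ^ n * osc id s x := by
  induction n with
  | zero => simp
  | succ n ih =>
    ext x
    rw [iteratedDeriv_succ, ih, (((hasDerivAt_osc (hasDerivAt_id x) s).const_mul _).deriv)]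
    push_cast
    ring

lemma hasTemperateGrowth_osc_id (s : ℝ) : (osc id s).HasTemperateGrowth := by
  refine ⟨(contDiff_const.mul Complex.ofRealCLM.contDiff).cexp, fun n => ⟨0, |s| ^ n, fun x => ?_⟩⟩
  rw [norm_iteratedFDeriv_eq_norm_iteratedDeriv, iteratedDeriv_osc_id, norm_mul, norm_osc]
  simp

@[fun_prop]
lemma hasTemperateGrowth_osc {φ : ℝ → ℝ} (hφ : φ.HasTemperateGrowth) (s : ℝ) :
    (osc φ s).HasTemperateGrowth :=
  (hasTemperateGrowth_osc_id s).comp hφ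

/-! ### Multiplication and differentiation of Schwartz functions -/

lemma smulLeftCLM_apply_eq_mul {m : ℝ → ℂ} (hm : m.HasTemperateGrowth) (h : 𝓢(ℝ, ℂ)) (x : ℝ) :
    smulLeftCLM ℂ m h x = m x * h x := by
  rw [smulLeftCLM_apply_apply hm, smul_eq_mul]

lemma hasDerivAt_derivCLM (h : 𝓢(ℝ, ℂ)) (x : ℝ) : HasDerivAt h (derivCLM ℂ ℂ h x) x :=
  h.differentiableAt.hasDerivAt

lemma derivCLM_smulLeftCLM_apply {m : ℝ → ℂ} (hm : m.HasTemperateGrowth) {d : ℂ} {x : ℝ}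
    (hd : HasDerivAt m d x) (h : 𝓢(ℝ, ℂ)) :
    derivCLM ℂ ℂ (smulLeftCLM ℂ m h) x = d * h x + m x * derivCLM ℂ ℂ h x := by
  have heq : ⇑(smulLeftCLM ℂ m h) = fun y => m y * h y := funext (smulLeftCLM_apply_eq_mul hm h)
  rw [derivCLM_apply, heq]
  exact (hd.mul (hasDerivAt_derivCLM h x)).deriv

/-- Multiplication by `⟨ξ⟩`. -/
noncomputable def japMul : 𝓢(ℝ, ℂ) →L[ℂ] 𝓢(ℝ, ℂ) := smulLeftCLM ℂ (fun ξ => (jap ξ : ℂ))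

lemma japMul_apply (F : 𝓢(ℝ, ℂ)) (ξ : ℝ) : japMul F ξ = jap ξ * F ξ :=
  smulLeftCLM_apply_eq_mul (by fun_prop) F ξ

lemma norm_japMul_apply (F : 𝓢(ℝ, ℂ)) (ξ : ℝ) : ‖japMul F ξ‖ = jap ξ * ‖F ξ‖ := by
  rw [japMul_apply, norm_mul, Complex.norm_real, Real.norm_of_nonneg (jap_pos ξ).le]

lemma norm_le_norm_japMul (F : 𝓢(ℝ, ℂ)) (ξ : ℝ) : ‖F ξ‖ ≤ ‖japMul F ξ‖ := by
  rw [norm_japMul_apply]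
  exact le_mul_of_one_le_left (norm_nonneg _) (one_le_jap ξ)

/-- Multiplication by `⟨x⟩⁻²`. -/
noncomputable def weightMul : 𝓢(ℝ, ℂ) →L[ℂ] 𝓢(ℝ, ℂ) :=
  smulLeftCLM ℂ (fun x => (((1 + x ^ 2)⁻¹ : ℝ) : ℂ))

lemma weightMul_apply (F : 𝓢(ℝ, ℂ)) (x : ℝ) : weightMul F x = ((1 + x ^ 2)⁻¹ : ℝ) * F x :=
  smulLeftCLM_apply_eq_mul (by fun_prop) F x

/-! ### The unitary inverse Fourier transform -/

/-- The inverse Fourier transform `IFT` as an operator on Schwartz functions. Mathlib's `𝓕⁻` has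
frequency variable `2π` times smaller, whence the dilation. -/
noncomputable def iftCLM : 𝓢(ℝ, ℂ) →L[ℂ] 𝓢(ℝ, ℂ) :=
  (√(2 * Real.pi) : ℂ)⁻¹ •
    compCLMOfContinuousLinearEquiv ℂ
      (ContinuousLinearEquiv.smulLeft (Units.mk0 (2 * Real.pi)⁻¹ (by positivity)) : ℝ ≃L[ℝ] ℝ) ∘L
    FourierTransform.fourierInvCLM ℂ 𝓢(ℝ, ℂ)

lemma iftCLM_apply_eq_fourierInv (h : 𝓢(ℝ, ℂ)) (x : ℝ) :
    iftCLM h x = (√(2 * Real.pi) : ℂ)⁻¹ * (𝓕⁻ h) ((2 * Real.pi)⁻¹ * x) := rfl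

lemma iftCLM_apply (h : 𝓢(ℝ, ℂ)) (x : ℝ) : iftCLM h x = IFT h x := by
  rw [iftCLM_apply_eq_fourierInv, IFT, fourierInv_coe, Real.fourierInv_eq']
  congr 2 with ξ
  rw [smul_eq_mul]
  congr 2
  simp only [RCLike.inner_apply, conj_trivial]
  push_cast
  field_simp

lemma lineDerivOp_one_eq_derivCLM (h : 𝓢(ℝ, ℂ)) :
    LineDeriv.lineDerivOp (1 : ℝ) h = derivCLM ℂ ℂ h := by
  ext x
  simp [lineDerivOp_apply_eq_fderiv]

lemma iftCLM_derivCLM_apply (h : 𝓢(ℝ, ℂ)) (x : ℝ) :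
    iftCLM (derivCLM ℂ ℂ h) x = -(Complex.I * x) * iftCLM h x := by
  have hinv := fourierInv_lineDerivOp_eq h (1 : ℝ)
  rw [lineDerivOp_one_eq_derivCLM] at hinv
  rw [iftCLM_apply_eq_fourierInv, hinv, iftCLM_apply_eq_fourierInv, _root_.smul_apply,
    smulLeftCLM_apply_apply (by fun_prop)]
  simp only [RCLike.inner_apply, conj_trivial, one_mul, Complex.real_smul, smul_eq_mul]
  push_cast
  field_simp

lemma derivCLM_iftCLM (h : 𝓢(ℝ, ℂ)) :
    derivCLM ℂ ℂ (iftCLM h) = iftCLM (smulLeftCLM ℂ (fun x : ℝ => Complex.I * x) h) := by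
  have hmul : (2 * Real.pi * Complex.I) • smulLeftCLM ℂ (fun x : ℝ => inner ℝ x (1 : ℝ)) h
      = (2 * Real.pi : ℂ) • smulLeftCLM ℂ (fun x : ℝ => Complex.I * x) h := by
    ext y
    rw [_root_.smul_apply, _root_.smul_apply, smulLeftCLM_apply_apply (by fun_prop),
      smulLeftCLM_apply_eq_mul (by fun_prop)]
    simp only [RCLike.inner_apply, conj_trivial, one_mul, Complex.real_smul, smul_eq_mul]
    ring
  have hderiv : derivCLM ℂ ℂ (𝓕⁻ h) =
      (2 * Real.pi : ℂ) • 𝓕⁻ (smulLeftCLM ℂ (fun x : ℝ => Complex.I * x) h) := by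
    rw [← lineDerivOp_one_eq_derivCLM, lineDerivOp_fourierInv_eq, hmul,
      FourierTransform.fourierInv_smul]
  ext x
  have hdil : HasDerivAt (fun y : ℝ => (2 * Real.pi)⁻¹ * y) (2 * Real.pi)⁻¹ x := by
    simpa using (hasDerivAt_id x).const_mul (2 * Real.pi)⁻¹
  have hchain := ((hasDerivAt_derivCLM (𝓕⁻ h) _).scomp x hdil).const_mul (√(2 * Real.pi) : ℂ)⁻¹
  rw [derivCLM_apply, iftCLM_apply_eq_fourierInv, show ⇑(iftCLM h) = _ from
    funext (iftCLM_apply_eq_fourierInv h)]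
  refine hchain.deriv.trans ?_
  rw [hderiv, _root_.smul_apply, Complex.real_smul, smul_eq_mul]
  push_cast
  field_simp

lemma norm_IFT_le (h : ℝ → ℂ) (x : ℝ) : ‖IFT h x‖ ≤ (√(2 * Real.pi))⁻¹ * ∫ y, ‖h y‖ := by
  have hphase : ∀ y : ℝ, ‖Complex.exp (Complex.I * x * y) * h y‖ = ‖h y‖ := fun y => by
    rw [norm_mul, show ‖Complex.exp (Complex.I * x * y)‖ = 1 from norm_osc id x y, one_mul]
  rw [IFT, norm_mul, norm_inv, Complex.norm_real, Real.norm_of_nonneg (Real.sqrt_nonneg _)]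
  gcongr
  exact (norm_integral_le_integral_norm _).trans_eq (by simp only [hphase])

lemma FT_eq_IFT_comp_neg (h : ℝ → ℂ) : FT h = IFT fun x => h (-x) := by
  ext ξ
  rw [FT, IFT, ← integral_neg_eq_self]
  congr 2 with x
  congr 2
  push_cast
  ring

/-! ### The `L²` and `H¹` norms -/

lemma L2C_nonneg (h : ℝ → ℂ) : 0 ≤ L2C h := Real.sqrt_nonneg _

lemma L2C_sq (h : ℝ → ℂ) : L2C h ^ 2 = ∫ x, ‖h x‖ ^ 2 :=
  Real.sq_sqrt (integral_nonneg fun x => by positivity)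

lemma L2C_eq_toReal_eLpNorm {h : ℝ → ℂ} (hh : MemLp h 2) : L2C h = (eLpNorm h 2).toReal := by
  rw [hh.eLpNorm_eq_integral_rpow_norm two_ne_zero ENNReal.ofNat_ne_top,
    ENNReal.toReal_ofReal (by positivity), L2C, Real.sqrt_eq_rpow]
  simp

lemma L2C_mono {h k : ℝ → ℂ} (hk : MemLp k 2) (hle : ∀ x, ‖h x‖ ≤ ‖k x‖) : L2C h ≤ L2C k := by
  refine Real.sqrt_le_sqrt (integral_mono_of_nonneg (ae_of_all _ fun x => by positivity) ?_
    (ae_of_all _ fun x => pow_le_pow_left₀ (norm_nonneg _) (hle x) 2))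
  exact_mod_cast hk.integrable_norm_pow two_ne_zero

lemma L2C_const_smul (a : ℂ) (h : ℝ → ℂ) : L2C (a • h) = ‖a‖ * L2C h := by
  simp only [L2C, Pi.smul_apply, norm_smul, mul_pow, integral_const_mul]
  rw [Real.sqrt_mul (sq_nonneg _), Real.sqrt_sq (norm_nonneg a)]

lemma L2C_add_le {h k : ℝ → ℂ} (hh : MemLp h 2) (hk : MemLp k 2) :
    L2C (h + k) ≤ L2C h + L2C k := by
  rw [L2C_eq_toReal_eLpNorm hh, L2C_eq_toReal_eLpNorm hk, L2C_eq_toReal_eLpNorm (hh.add hk),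
    ← ENNReal.toReal_add hh.2.ne hk.2.ne]
  exact ENNReal.toReal_mono (ENNReal.add_ne_top.2 ⟨hh.2.ne, hk.2.ne⟩)
    (eLpNorm_add_le hh.1 hk.1 one_le_two)

lemma L2C_le_mul_add_mul {h f g : ℝ → ℂ} {a b : ℝ} (ha : 0 ≤ a) (hb : 0 ≤ b) (hf : MemLp f 2)
    (hg : MemLp g 2) (hle : ∀ x, ‖h x‖ ≤ a * ‖f x‖ + b * ‖g x‖) :
    L2C h ≤ a * L2C f + b * L2C g := by
  have hnorm : ∀ k : ℝ → ℂ, L2C (fun x => (‖k x‖ : ℂ)) = L2C k := fun k => by simp [L2C]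
  have hmem : ∀ {k : ℝ → ℂ} (c : ℝ), MemLp k 2 → MemLp ((c : ℂ) • fun x => (‖k x‖ : ℂ)) 2 :=
    fun c hk => hk.norm.ofReal.const_smul _
  calc L2C h ≤ L2C ((a : ℂ) • (fun x => (‖f x‖ : ℂ)) + (b : ℂ) • fun x => (‖g x‖ : ℂ)) := by
        refine L2C_mono ((hmem a hf).add (hmem b hg)) fun x => (hle x).trans_eq ?_
        simp only [Pi.add_apply, Pi.smul_apply, smul_eq_mul]
        rw [← Complex.ofReal_mul, ← Complex.ofReal_mul, ← Complex.ofReal_add, Complex.norm_real,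
          Real.norm_of_nonneg (by positivity)]
    _ ≤ _ := L2C_add_le (hmem a hf) (hmem b hg)
    _ = a * L2C f + b * L2C g := by
        simp only [L2C_const_smul, hnorm, Complex.norm_real, Real.norm_of_nonneg ha,
          Real.norm_of_nonneg hb]

lemma L2C_le_add {h f g : ℝ → ℂ} (hf : MemLp f 2) (hg : MemLp g 2)
    (hle : ∀ x, ‖h x‖ ≤ ‖f x‖ + ‖g x‖) : L2C h ≤ L2C f + L2C g := by
  simpa only [one_mul] using L2C_le_mul_add_mul zero_le_one zero_le_one hf hg
    (by simpa only [one_mul] using hle)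

lemma L2C_le_mul {h k : ℝ → ℂ} {a : ℝ} (ha : 0 ≤ a) (hk : MemLp k 2)
    (hle : ∀ x, ‖h x‖ ≤ a * ‖k x‖) : L2C h ≤ a * L2C k := by
  simpa using L2C_le_mul_add_mul ha le_rfl hk hk fun x => (hle x).trans_eq (by simp)

lemma L2C_comp_neg (h : ℝ → ℂ) : L2C (fun x => h (-x)) = L2C h := by
  rw [L2C, L2C, integral_neg_eq_self (fun x => ‖h x‖ ^ 2)]

lemma L2C_iftCLM (h : 𝓢(ℝ, ℂ)) : L2C (iftCLM h) = L2C h := by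
  have hpi : 0 < 2 * Real.pi := by positivity
  have hplancherel : ∫ x, ‖(𝓕⁻ h) x‖ ^ 2 = ∫ x, ‖h x‖ ^ 2 := by
    rw [← integral_norm_sq_fourier (𝓕⁻ h), FourierTransform.fourier_fourierInv_eq]
  have hnorm : ∀ x, ‖iftCLM h x‖ ^ 2 = (2 * Real.pi)⁻¹ * ‖(𝓕⁻ h) ((2 * Real.pi)⁻¹ * x)‖ ^ 2 :=
    fun x => by
      rw [iftCLM_apply_eq_fourierInv, norm_mul, mul_pow, norm_inv, Complex.norm_real, inv_pow,
        Real.norm_of_nonneg (Real.sqrt_nonneg _), Real.sq_sqrt hpi.le]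
  have hdil : ∫ x, ‖(𝓕⁻ h) ((2 * Real.pi)⁻¹ * x)‖ ^ 2 = 2 * Real.pi * ∫ x, ‖(𝓕⁻ h) x‖ ^ 2 := by
    rw [Measure.integral_comp_mul_left (fun x => ‖(𝓕⁻ h : 𝓢(ℝ, ℂ)) x‖ ^ 2), inv_inv,
      abs_of_pos hpi, smul_eq_mul]
  rw [L2C, L2C, integral_congr_ae (ae_of_all _ hnorm), integral_const_mul, hdil, hplancherel,
    inv_mul_cancel_left₀ hpi.ne']

/-- The `H¹` norm, in the form `‖h‖_{L²} + ‖h'‖_{L²}`. -/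
noncomputable def sobolevNorm (h : 𝓢(ℝ, ℂ)) : ℝ := L2C h + L2C (derivCLM ℂ ℂ h)

lemma sobolevNorm_nonneg (h : 𝓢(ℝ, ℂ)) : 0 ≤ sobolevNorm h :=
  add_nonneg (L2C_nonneg _) (L2C_nonneg _)

lemma L2C_le_sobolevNorm (h : 𝓢(ℝ, ℂ)) : L2C h ≤ sobolevNorm h :=
  le_add_of_nonneg_right (L2C_nonneg _)

lemma sobolevNorm_smulLeftCLM_le {m m' : ℝ → ℂ} (hm : m.HasTemperateGrowth)
    (hderiv : ∀ x, HasDerivAt m (m' x) x) {a b : ℝ} (ha : ∀ x, ‖m x‖ ≤ a) (hb : ∀ x, ‖m' x‖ ≤ b)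
    (h : 𝓢(ℝ, ℂ)) : sobolevNorm (smulLeftCLM ℂ m h) ≤ (a + b) * sobolevNorm h := by
  have ha0 : 0 ≤ a := (norm_nonneg _).trans (ha 0)
  have hb0 : 0 ≤ b := (norm_nonneg _).trans (hb 0)
  have hzero : L2C (smulLeftCLM ℂ m h) ≤ a * L2C h :=
    L2C_le_mul ha0 (h.memLp 2) fun x => by
      rw [smulLeftCLM_apply_eq_mul hm, norm_mul]
      gcongr
      exact ha x
  have hone : L2C (derivCLM ℂ ℂ (smulLeftCLM ℂ m h)) ≤
      b * L2C h + a * L2C (derivCLM ℂ ℂ h) :=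
    L2C_le_mul_add_mul hb0 ha0 (h.memLp 2) ((derivCLM ℂ ℂ h).memLp 2) fun x => by
      rw [derivCLM_smulLeftCLM_apply hm (hderiv x)]
      refine (norm_add_le _ _).trans ?_
      rw [norm_mul, norm_mul]
      gcongr
      exacts [hb x, ha x]
  have := mul_nonneg hb0 (L2C_nonneg (derivCLM ℂ ℂ h))
  rw [sobolevNorm, sobolevNorm]
  linarith

lemma L2C_japMul_iftCLM_le (h : 𝓢(ℝ, ℂ)) : L2C (japMul (iftCLM h)) ≤ sobolevNorm h := by
  have hle : ∀ x, ‖japMul (iftCLM h) x‖ ≤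
      ‖iftCLM h x‖ + ‖iftCLM (derivCLM ℂ ℂ h) x‖ := fun x => by
    rw [norm_japMul_apply, iftCLM_derivCLM_apply, norm_mul, norm_neg, norm_mul, Complex.norm_I,
      Complex.norm_real, Real.norm_eq_abs]
    linarith [mul_le_mul_of_nonneg_right (jap_le_one_add_abs x) (norm_nonneg (iftCLM h x))]
  refine (L2C_le_add ((iftCLM h).memLp 2) ((iftCLM _).memLp 2) hle).trans_eq ?_
  rw [L2C_iftCLM, L2C_iftCLM, sobolevNorm]

lemma norm_sq_le_L2C_sq_add_sq (h : 𝓢(ℝ, ℂ)) (x : ℝ) :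
    ‖h x‖ ^ 2 ≤ L2C h ^ 2 + L2C (derivCLM ℂ ℂ h) ^ 2 := by
  set h' := derivCLM ℂ ℂ h
  have hint : Integrable fun y => ‖h y‖ ^ 2 := (h.memLp 2).integrable_norm_pow two_ne_zero
  have hint' : Integrable fun y => ‖h' y‖ ^ 2 := (h'.memLp 2).integrable_norm_pow two_ne_zero
  have hle : ∀ y, ‖2 * inner ℝ (h y) (h' y)‖ ≤ ‖h y‖ ^ 2 + ‖h' y‖ ^ 2 := fun y => by
    rw [norm_mul, Real.norm_ofNat]
    nlinarith [norm_inner_le_norm (𝕜 := ℝ) (h y) (h' y), two_mul_le_add_sq ‖h y‖ ‖h' y‖]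
  have hsum : Integrable fun y => ‖h y‖ ^ 2 + ‖h' y‖ ^ 2 := hint.add hint'
  have hderiv : Integrable fun y => 2 * inner ℝ (h y) (h' y) :=
    hsum.mono' (continuous_const.mul
      (h.continuous.inner h'.continuous)).aestronglyMeasurable (ae_of_all _ hle)
  have hlim : Filter.Tendsto (fun y => ‖h y‖ ^ 2) Filter.atBot (nhds 0) := by
    simpa using ((zero_at_infty h).mono_left (atBot_le_cocompact (α := ℝ))).norm.pow 2
  have hFTC := integral_Iic_of_hasDerivAt_of_tendsto' (a := x)
    (fun y _ => (hasDerivAt_derivCLM h y).norm_sq) hderiv.integrableOn hlim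
  calc ‖h x‖ ^ 2 = ∫ y in Set.Iic x, 2 * inner ℝ (h y) (h' y) := by rw [hFTC, sub_zero]
    _ ≤ ∫ y in Set.Iic x, (‖h y‖ ^ 2 + ‖h' y‖ ^ 2) :=
        integral_mono hderiv.integrableOn hsum.integrableOn
          fun y => (le_abs_self _).trans (hle y)
    _ ≤ ∫ y, (‖h y‖ ^ 2 + ‖h' y‖ ^ 2) :=
        setIntegral_le_integral hsum (ae_of_all _ fun y => by positivity)
    _ = L2C h ^ 2 + L2C h' ^ 2 := by rw [integral_add hint hint', L2C_sq, L2C_sq]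

lemma norm_le_sobolevNorm (h : 𝓢(ℝ, ℂ)) (x : ℝ) : ‖h x‖ ≤ sobolevNorm h := by
  refine le_of_sq_le_sq ?_ (sobolevNorm_nonneg h)
  have := mul_nonneg (L2C_nonneg h) (L2C_nonneg (derivCLM ℂ ℂ h))
  rw [sobolevNorm]
  linarith [norm_sq_le_L2C_sq_add_sq h x, add_sq (L2C h) (L2C (derivCLM ℂ ℂ h))]

/-! ### The weighted inverse Fourier transform -/

/-- The operator `h ↦ ⟨x⟩⁻¹ ℱ⁻¹h`. It maps both `L¹` and `L²` to `L²`, and it also absorbs one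
derivative falling on `h`. -/
noncomputable def weightedIFT : 𝓢(ℝ, ℂ) →L[ℂ] 𝓢(ℝ, ℂ) :=
  smulLeftCLM ℂ (fun x => (((jap x)⁻¹ : ℝ) : ℂ)) ∘L iftCLM

lemma weightedIFT_apply (h : 𝓢(ℝ, ℂ)) (x : ℝ) :
    weightedIFT h x = ((jap x)⁻¹ : ℝ) * iftCLM h x :=
  smulLeftCLM_apply_eq_mul (by fun_prop) (iftCLM h) x

lemma norm_weightedIFT_apply (h : 𝓢(ℝ, ℂ)) (x : ℝ) :
    ‖weightedIFT h x‖ = (jap x)⁻¹ * ‖iftCLM h x‖ := by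
  rw [weightedIFT_apply, norm_mul, Complex.norm_real,
    Real.norm_of_nonneg (inv_nonneg.2 (jap_pos x).le)]

lemma L2C_weightedIFT_le (h : 𝓢(ℝ, ℂ)) : L2C (weightedIFT h) ≤ L2C h := by
  rw [← L2C_iftCLM h]
  refine L2C_mono ((iftCLM h).memLp 2) fun x => ?_
  rw [norm_weightedIFT_apply]
  exact mul_le_of_le_one_left (norm_nonneg _) (inv_jap_le_one x)

lemma L2C_weightedIFT_derivCLM_le (h : 𝓢(ℝ, ℂ)) :
    L2C (weightedIFT (derivCLM ℂ ℂ h)) ≤ L2C h := by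
  rw [← L2C_iftCLM h]
  refine L2C_mono ((iftCLM h).memLp 2) fun x => ?_
  rw [norm_weightedIFT_apply, iftCLM_derivCLM_apply, norm_mul, norm_neg, norm_mul, Complex.norm_I,
    one_mul, Complex.norm_real, Real.norm_eq_abs, ← mul_assoc]
  refine mul_le_of_le_one_left (norm_nonneg _) ?_
  rw [inv_mul_le_one₀ (jap_pos x)]
  exact abs_le_jap x

lemma L2C_weightedIFT_le_integral (h : 𝓢(ℝ, ℂ)) : L2C (weightedIFT h) ≤ ∫ x, ‖h x‖ := by
  have hweight : ∀ x, ‖(((jap x)⁻¹ : ℝ) : ℂ)‖ ^ 2 = (1 + x ^ 2)⁻¹ := fun x => by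
    rw [Complex.norm_real, Real.norm_eq_abs, sq_abs, inv_pow, jap_sq]
  have hmem : MemLp (fun x => (((jap x)⁻¹ : ℝ) : ℂ)) 2 := by
    rw [memLp_two_iff_integrable_sq_norm
      (hasTemperateGrowth_ofReal hasTemperateGrowth_inv_jap).1.continuous.aestronglyMeasurable]
    simpa only [hweight] using integrable_inv_one_add_sq
  have hint : 0 ≤ ∫ x, ‖h x‖ := integral_nonneg fun x => norm_nonneg _
  calc L2C (weightedIFT h)
      ≤ ((√(2 * Real.pi))⁻¹ * ∫ x, ‖h x‖) * L2C fun x => (((jap x)⁻¹ : ℝ) : ℂ) := by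
        refine L2C_le_mul (by positivity) hmem fun x => ?_
        rw [weightedIFT_apply, norm_mul, mul_comm, iftCLM_apply]
        gcongr
        exact norm_IFT_le h x
    _ = (√(2 * Real.pi))⁻¹ * √Real.pi * ∫ x, ‖h x‖ := by
        rw [L2C, integral_congr_ae (ae_of_all _ hweight), integral_univ_inv_one_add_sq]
        ring
    _ ≤ ∫ x, ‖h x‖ := by
        refine mul_le_of_le_one_left hint ((inv_mul_le_one₀ (by positivity)).2 ?_)
        exact Real.sqrt_le_sqrt (by linarith [Real.pi_pos])

/-! ### Stationary phase -/

/-- The reciprocal `y⁻¹` regularised at scale `ε`: for a phase with derivative `φ'`, integrating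
`e^{isφ}` by parts against `regInv ε ∘ φ'` avoids the division by `φ'` at stationary points. -/
noncomputable def regInv (ε y : ℝ) : ℝ := y * (y ^ 2 + ε ^ 2)⁻¹

lemma hasTemperateGrowth_regInv {ε : ℝ} (hε : 0 < ε) : (regInv ε).HasTemperateGrowth := by
  have hscale : regInv ε = fun y => y * ((ε ^ 2)⁻¹ * (1 + (ε⁻¹ * y) ^ 2)⁻¹) := by
    ext y
    rw [regInv]
    field_simp
    ring
  have hcomp : (fun y : ℝ => (1 + (ε⁻¹ * y) ^ 2)⁻¹).HasTemperateGrowth :=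
    hasTemperateGrowth_inv_one_add_sq.comp (by fun_prop : (fun y => ε⁻¹ * y).HasTemperateGrowth)
  rw [hscale]
  fun_prop

lemma hasDerivAt_regInv {ε : ℝ} (hε : 0 < ε) (y : ℝ) :
    HasDerivAt (regInv ε) ((ε ^ 2 - y ^ 2) / (y ^ 2 + ε ^ 2) ^ 2) y := by
  have hden : HasDerivAt (fun z => z ^ 2 + ε ^ 2) (2 * y) y := by
    simpa using (hasDerivAt_pow 2 y).add_const (ε ^ 2)
  refine ((hasDerivAt_id y).mul (hden.inv (by positivity))).congr_deriv ?_
  simp only [id, Pi.inv_apply]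
  field_simp
  ring

lemma abs_regInv_le {ε : ℝ} (hε : 0 < ε) (y : ℝ) : |regInv ε y| ≤ ε⁻¹ := by
  rw [regInv, abs_mul, abs_inv, abs_of_pos (by positivity : 0 < y ^ 2 + ε ^ 2), ← div_eq_mul_inv,
    div_le_iff₀ (by positivity), inv_mul_eq_div, le_div_iff₀ hε]
  nlinarith [sq_abs y, two_mul_le_add_sq |y| ε]

lemma one_sub_mul_regInv {ε : ℝ} (hε : 0 < ε) (y : ℝ) :
    1 - y * regInv ε y = ε ^ 2 / (y ^ 2 + ε ^ 2) := by
  rw [regInv]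
  field_simp
  ring

lemma abs_sq_sub_sq_div_le {ε : ℝ} (hε : 0 < ε) (y : ℝ) :
    |(ε ^ 2 - y ^ 2) / (y ^ 2 + ε ^ 2) ^ 2| ≤ 1 / (y ^ 2 + ε ^ 2) := by
  have hden : 0 < y ^ 2 + ε ^ 2 := by positivity
  rw [abs_div, abs_of_pos (pow_pos hden 2), div_le_div_iff₀ (pow_pos hden 2) hden,
    sq (y ^ 2 + ε ^ 2), one_mul]
  gcongr
  rw [abs_le]
  constructor <;> linarith [sq_nonneg y, sq_nonneg ε]

lemma norm_inv_I_mul_ofReal (s : ℝ) : ‖(Complex.I * s)⁻¹‖ = |s|⁻¹ := by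
  rw [norm_inv, norm_mul, Complex.norm_I, one_mul, Complex.norm_real, Real.norm_eq_abs]

section Phase

variable {φ φ' : ℝ → ℝ} {ε s : ℝ}

/-- Multiplication by `regInv ε ∘ φ' · e^{isφ}`, the boundary operator of one integration by parts
against `e^{isφ}`. -/
noncomputable def parametrix (φ φ' : ℝ → ℝ) (ε s : ℝ) : 𝓢(ℝ, ℂ) →L[ℂ] 𝓢(ℝ, ℂ) :=
  smulLeftCLM ℂ (fun x => regInv ε (φ' x) * osc φ s x)

/-- What one regularised integration by parts leaves of `e^{isφ} B`: it is concentrated where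
`|φ'| ≲ ε`. -/
noncomputable def stationaryPart (φ φ' : ℝ → ℝ) (ε s : ℝ) (B : 𝓢(ℝ, ℂ)) : 𝓢(ℝ, ℂ) :=
  smulLeftCLM ℂ (osc φ s) B - (Complex.I * s)⁻¹ •
    (derivCLM ℂ ℂ (parametrix φ φ' ε s B) - parametrix φ φ' ε s (derivCLM ℂ ℂ B))

lemma hasTemperateGrowth_parametrix_symbol (hφ : φ.HasTemperateGrowth)
    (hφ' : φ'.HasTemperateGrowth) (hε : 0 < ε) :
    (fun x => regInv ε (φ' x) * osc φ s x).HasTemperateGrowth := by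
  have := (hasTemperateGrowth_regInv hε).comp hφ'
  exact (hasTemperateGrowth_ofReal this).mul (hasTemperateGrowth_osc hφ s)

lemma L2C_parametrix_le (hφ : φ.HasTemperateGrowth) (hφ' : φ'.HasTemperateGrowth) (hε : 0 < ε)
    (B : 𝓢(ℝ, ℂ)) : L2C (parametrix φ φ' ε s B) ≤ ε⁻¹ * L2C B := by
  refine L2C_le_mul (inv_nonneg.2 hε.le) (B.memLp 2) fun x => ?_
  rw [parametrix, smulLeftCLM_apply_eq_mul (hasTemperateGrowth_parametrix_symbol hφ hφ' hε),
    norm_mul, norm_mul, norm_osc, mul_one, Complex.norm_real]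
  gcongr
  exact abs_regInv_le hε (φ' x)

lemma stationaryPart_apply (hφ : φ.HasTemperateGrowth) (hφ' : φ'.HasTemperateGrowth)
    (hε : 0 < ε) (hs : s ≠ 0) {x c : ℝ} (hd : HasDerivAt φ (φ' x) x) (hd' : HasDerivAt φ' c x)
    (B : 𝓢(ℝ, ℂ)) :
    stationaryPart φ φ' ε s B x =
      (((1 - φ' x * regInv ε (φ' x) : ℝ) : ℂ) - (Complex.I * s)⁻¹ *
        (((ε ^ 2 - φ' x ^ 2) / (φ' x ^ 2 + ε ^ 2) ^ 2 * c : ℝ) : ℂ)) * (osc φ s x * B x) := by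
  have hsymbol := hasTemperateGrowth_parametrix_symbol (s := s) hφ hφ' hε
  have hderiv := ((hasDerivAt_regInv hε (φ' x)).comp x hd').ofReal_comp.mul (hasDerivAt_osc hd s)
  have hs' : (s : ℂ) ≠ 0 := Complex.ofReal_ne_zero.2 hs
  rw [stationaryPart, _root_.sub_apply, _root_.smul_apply, _root_.sub_apply,
    smul_eq_mul, parametrix, derivCLM_smulLeftCLM_apply hsymbol hderiv,
    smulLeftCLM_apply_eq_mul hsymbol, smulLeftCLM_apply_eq_mul (hasTemperateGrowth_osc hφ s)]
  simp only [comp_apply]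
  push_cast
  field_simp
  ring

lemma norm_stationaryPart_le (hφ : φ.HasTemperateGrowth) (hφ' : φ'.HasTemperateGrowth)
    (hε : 0 < ε) (hεs : ε ^ 2 * |s| = 1) {x c : ℝ} (hd : HasDerivAt φ (φ' x) x)
    (hd' : HasDerivAt φ' c x) (B : 𝓢(ℝ, ℂ)) :
    ‖stationaryPart φ φ' ε s B x‖ ≤
      (1 + |c|) * (ε ^ 2 / (φ' x ^ 2 + ε ^ 2)) * ‖B x‖ := by
  have hs : s ≠ 0 := fun h => by simp [h] at hεs
  rw [stationaryPart_apply hφ hφ' hε hs hd hd', norm_mul, norm_mul, norm_osc, one_mul,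
    one_sub_mul_regInv hε]
  gcongr
  refine (norm_sub_le _ _).trans ?_
  rw [norm_mul, norm_inv_I_mul_ofReal, ← eq_inv_of_mul_eq_one_left hεs, Complex.norm_real,
    Complex.norm_real, Real.norm_eq_abs, Real.norm_eq_abs, abs_of_pos (by positivity), abs_mul]
  have hreg := mul_le_mul_of_nonneg_right (abs_sq_sub_sq_div_le hε (φ' x)) (abs_nonneg c)
  have := mul_le_mul_of_nonneg_left hreg (sq_nonneg ε)
  linear_combination this

lemma L2C_weightedIFT_osc_le (hφ : φ.HasTemperateGrowth) (hφ' : φ'.HasTemperateGrowth)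
    (hε : 0 < ε) (hεs : ε ^ 2 * |s| = 1) (B : 𝓢(ℝ, ℂ)) :
    L2C (weightedIFT (smulLeftCLM ℂ (osc φ s) B)) ≤
      ε * sobolevNorm B + L2C (weightedIFT (stationaryPart φ φ' ε s B)) := by
  set Q := parametrix φ φ' ε s
  set R := stationaryPart φ φ' ε s B with hR
  set K := weightedIFT (derivCLM ℂ ℂ (Q B)) - weightedIFT (Q (derivCLM ℂ ℂ B)) with hK
  have hsplit : weightedIFT (smulLeftCLM ℂ (osc φ s) B) =
      (Complex.I * s)⁻¹ • K + weightedIFT R := by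
    rw [hR, hK, stationaryPart, ← map_sub, ← map_smul, ← map_add, add_sub_cancel]
  have hcomm : L2C K ≤ ε⁻¹ * sobolevNorm B := calc
    L2C K ≤ L2C (weightedIFT (derivCLM ℂ ℂ (Q B))) + L2C (weightedIFT (Q (derivCLM ℂ ℂ B))) :=
        L2C_le_add ((weightedIFT _).memLp 2) ((weightedIFT _).memLp 2) fun x => by
          rw [hK, _root_.sub_apply]
          exact norm_sub_le _ _
    _ ≤ L2C (Q B) + L2C (Q (derivCLM ℂ ℂ B)) :=
        add_le_add (L2C_weightedIFT_derivCLM_le _) (L2C_weightedIFT_le _)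
    _ ≤ ε⁻¹ * L2C B + ε⁻¹ * L2C (derivCLM ℂ ℂ B) :=
        add_le_add (L2C_parametrix_le hφ hφ' hε _) (L2C_parametrix_le hφ hφ' hε _)
    _ = ε⁻¹ * sobolevNorm B := (mul_add _ _ _).symm
  calc L2C (weightedIFT (smulLeftCLM ℂ (osc φ s) B))
      ≤ ε ^ 2 * L2C K + 1 * L2C (weightedIFT R) :=
        L2C_le_mul_add_mul (sq_nonneg ε) zero_le_one (K.memLp 2) ((weightedIFT R).memLp 2)
          fun x => by
            rw [hsplit, _root_.add_apply, _root_.smul_apply, eq_inv_of_mul_eq_one_left hεs,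
              ← norm_inv_I_mul_ofReal, ← norm_smul, one_mul]
            exact norm_add_le _ _
    _ ≤ ε ^ 2 * (ε⁻¹ * sobolevNorm B) + L2C (weightedIFT R) := by
        rw [one_mul]
        gcongr
    _ = ε * sobolevNorm B + L2C (weightedIFT R) := by
        field_simp

end Phase

/-! ### Local decay at rate `|s|^{-1/2}` -/

lemma integral_sq_div_sq_add_sq {ε : ℝ} (hε : 0 < ε) :
    Integrable (fun x : ℝ => ε ^ 2 / (x ^ 2 + ε ^ 2)) ∧
      ∫ x : ℝ, ε ^ 2 / (x ^ 2 + ε ^ 2) = ε * Real.pi := by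
  have hscale : (fun x : ℝ => ε ^ 2 / (x ^ 2 + ε ^ 2)) = fun x => (1 + (ε⁻¹ * x) ^ 2)⁻¹ := by
    ext x
    field_simp
    ring
  rw [hscale]
  refine ⟨integrable_inv_one_add_sq.comp_mul_left' (inv_ne_zero hε.ne'), ?_⟩
  rw [Measure.integral_comp_mul_left (fun y : ℝ => (1 + y ^ 2)⁻¹), integral_univ_inv_one_add_sq,
    inv_inv, abs_of_pos hε, smul_eq_mul]

lemma norm_stationaryPart_jap_le {ε s : ℝ} (hε : 0 < ε) (hεs : ε ^ 2 * |s| = 1) (B : 𝓢(ℝ, ℂ))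
    (x : ℝ) : ‖stationaryPart jap (fun y => y / jap y) ε s B x‖ ≤
      2 * (ε ^ 2 / ((x / jap x) ^ 2 + ε ^ 2)) * ‖B x‖ := by
  refine (norm_stationaryPart_le hasTemperateGrowth_jap hasTemperateGrowth_div_jap hε hεs
    (hasDerivAt_jap x) (hasDerivAt_div_jap x) B).trans ?_
  gcongr
  linarith [abs_inv_jap_pow_three_le_one x]

lemma inv_one_add_sq_mul_norm_stationaryPart_jap_le {ε s : ℝ} (hε : 0 < ε)
    (hεs : ε ^ 2 * |s| = 1) (B : 𝓢(ℝ, ℂ)) (x : ℝ) :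
    (1 + x ^ 2)⁻¹ * ‖stationaryPart jap (fun y => y / jap y) ε s B x‖ ≤
      2 * sobolevNorm B * (ε ^ 2 / (x ^ 2 + ε ^ 2)) := by
  have hweight : (1 + x ^ 2)⁻¹ * (ε ^ 2 / ((x / jap x) ^ 2 + ε ^ 2)) ≤
      ε ^ 2 / (x ^ 2 + ε ^ 2) := by
    rw [div_pow, jap_sq, inv_mul_eq_div, div_div, add_mul, div_mul_cancel₀ _ (by positivity)]
    gcongr
    exact le_mul_of_one_le_right (sq_nonneg ε) (by linarith [sq_nonneg x])
  calc _ ≤ (1 + x ^ 2)⁻¹ * (2 * (ε ^ 2 / ((x / jap x) ^ 2 + ε ^ 2)) * ‖B x‖) := by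
        gcongr
        exact norm_stationaryPart_jap_le hε hεs B x
    _ = 2 * ‖B x‖ * ((1 + x ^ 2)⁻¹ * (ε ^ 2 / ((x / jap x) ^ 2 + ε ^ 2))) := by ring
    _ ≤ _ := by
        have := sobolevNorm_nonneg B
        gcongr
        exact norm_le_sobolevNorm B x

lemma one_sub_inv_one_add_sq_mul_norm_stationaryPart_jap_le {ε s : ℝ} (hε : 0 < ε)
    (hεs : ε ^ 2 * |s| = 1) (B : 𝓢(ℝ, ℂ)) (x : ℝ) :
    (1 - (1 + x ^ 2)⁻¹) * ‖stationaryPart jap (fun y => y / jap y) ε s B x‖ ≤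
      2 * ε ^ 2 * ‖B x‖ := by
  have hsq : 1 - (1 + x ^ 2)⁻¹ = (x / jap x) ^ 2 := by
    rw [div_pow, jap_sq]
    field_simp
    ring
  have hweight : (x / jap x) ^ 2 * (ε ^ 2 / ((x / jap x) ^ 2 + ε ^ 2)) ≤ ε ^ 2 := by
    rw [mul_div_left_comm]
    exact mul_le_of_le_one_right (sq_nonneg ε)
      (div_le_one_of_le₀ (le_add_of_nonneg_right (sq_nonneg ε)) (by positivity))
  rw [hsq]
  calc _ ≤ (x / jap x) ^ 2 * (2 * (ε ^ 2 / ((x / jap x) ^ 2 + ε ^ 2)) * ‖B x‖) := by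
        gcongr
        exact norm_stationaryPart_jap_le hε hεs B x
    _ = 2 * ((x / jap x) ^ 2 * (ε ^ 2 / ((x / jap x) ^ 2 + ε ^ 2))) * ‖B x‖ := by ring
    _ ≤ _ := by gcongr

-- The weight `(1 + x²)⁻¹` cuts to frequencies where `φ' = x / ⟨x⟩` is comparable to `x`; there the
-- stationary part is small in `L¹`, elsewhere it is small in `L²`.
lemma L2C_weightedIFT_stationaryPart_jap_le {ε s : ℝ} (hε : 0 < ε) (hε1 : ε ≤ 1)
    (hεs : ε ^ 2 * |s| = 1) (B : 𝓢(ℝ, ℂ)) :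
    L2C (weightedIFT (stationaryPart jap (fun y => y / jap y) ε s B)) ≤
      9 * ε * sobolevNorm B := by
  set R := stationaryPart jap (fun y => y / jap y) ε s B
  set low := weightMul R with hlow_def
  have hlow : L2C (weightedIFT low) ≤ 2 * Real.pi * ε * sobolevNorm B := by
    obtain ⟨hint, hval⟩ := integral_sq_div_sq_add_sq hε
    calc L2C (weightedIFT low) ≤ ∫ x, ‖low x‖ := L2C_weightedIFT_le_integral low
      _ ≤ ∫ x, 2 * sobolevNorm B * (ε ^ 2 / (x ^ 2 + ε ^ 2)) := by
          refine integral_mono low.integrable.norm (hint.const_mul _) fun x => ?_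
          dsimp only
          rw [weightMul_apply, norm_mul, Complex.norm_real, Real.norm_of_nonneg (by positivity)]
          exact inv_one_add_sq_mul_norm_stationaryPart_jap_le hε hεs B x
      _ = 2 * Real.pi * ε * sobolevNorm B := by rw [integral_const_mul, hval]; ring
  have hhigh : L2C (weightedIFT (R - low)) ≤ 2 * ε ^ 2 * L2C B := by
    refine (L2C_weightedIFT_le _).trans (L2C_le_mul (by positivity) (B.memLp 2) fun x => ?_)
    have hcoef : 0 ≤ 1 - (1 + x ^ 2)⁻¹ :=
      sub_nonneg.2 (inv_le_one_of_one_le₀ (by linarith [sq_nonneg x]))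
    have hfactor : (R - low) x = ((1 - (1 + x ^ 2)⁻¹ : ℝ) : ℂ) * R x := by
      rw [_root_.sub_apply, hlow_def, weightMul_apply, Complex.ofReal_sub,
        Complex.ofReal_one, sub_mul, one_mul]
    rw [hfactor, norm_mul, Complex.norm_real, Real.norm_of_nonneg hcoef]
    exact one_sub_inv_one_add_sq_mul_norm_stationaryPart_jap_le hε hεs B x
  have hB := sobolevNorm_nonneg B
  calc L2C (weightedIFT R) ≤ L2C (weightedIFT low) + L2C (weightedIFT (R - low)) :=
        L2C_le_add ((weightedIFT low).memLp 2) ((weightedIFT _).memLp 2) fun x => by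
          rw [map_sub, _root_.sub_apply]
          exact norm_le_norm_add_norm_sub' _ _
    _ ≤ 2 * Real.pi * ε * sobolevNorm B + 2 * ε * sobolevNorm B := by
        refine add_le_add hlow (hhigh.trans ?_)
        gcongr
        · exact L2C_nonneg B
        · exact pow_le_of_le_one hε.le hε1 two_ne_zero
        · exact L2C_le_sobolevNorm B
    _ ≤ 9 * ε * sobolevNorm B := by
        nlinarith [mul_le_mul_of_nonneg_right Real.pi_lt_d2.le (mul_nonneg hε.le hB),
          mul_nonneg hε.le hB]

lemma L2C_weightedIFT_osc_jap_le {s : ℝ} (hs : 1 ≤ |s|) (B : 𝓢(ℝ, ℂ)) :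
    L2C (weightedIFT (smulLeftCLM ℂ (osc jap s) B)) ≤
      10 * |s| ^ (-(1 / 2) : ℝ) * sobolevNorm B := by
  have hs0 : 0 < |s| := zero_lt_one.trans_le hs
  set ε := |s| ^ (-(1 / 2) : ℝ)
  have hε : 0 < ε := Real.rpow_pos_of_pos hs0 _
  have hε1 : ε ≤ 1 := Real.rpow_le_one_of_one_le_of_nonpos hs (by norm_num)
  have hεs : ε ^ 2 * |s| = 1 := by
    rw [← Real.rpow_mul_natCast hs0.le, Nat.cast_ofNat,
      show -(1 / 2) * 2 = (-1 : ℝ) by norm_num, Real.rpow_neg_one, inv_mul_cancel₀ hs0.ne']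
  linarith [L2C_weightedIFT_osc_le hasTemperateGrowth_jap hasTemperateGrowth_div_jap hε hεs B,
    L2C_weightedIFT_stationaryPart_jap_le hε hε1 hεs B]

/-! ### The gain of `|s|⁻¹` from the derivative -/

/-- The Fourier multiplier `iξ e^{is⟨ξ⟩}` of `∂_x e^{is⟨∇⟩}`, acting on the frequency side. -/
noncomputable def derivPropagator (s : ℝ) : 𝓢(ℝ, ℂ) →L[ℂ] 𝓢(ℝ, ℂ) :=
  smulLeftCLM ℂ (fun ξ : ℝ => Complex.I * ξ * osc jap s ξ)

lemma hasTemperateGrowth_derivPropagator_symbol (s : ℝ) :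
    (fun ξ : ℝ => Complex.I * ξ * osc jap s ξ).HasTemperateGrowth := by
  fun_prop

lemma derivCLM_japMul (F : 𝓢(ℝ, ℂ)) :
    derivCLM ℂ ℂ (japMul F) =
      smulLeftCLM ℂ (fun ξ => ((ξ / jap ξ : ℝ) : ℂ)) F + japMul (derivCLM ℂ ℂ F) := by
  ext ξ
  rw [_root_.add_apply, japMul_apply,
    smulLeftCLM_apply_eq_mul (hasTemperateGrowth_ofReal hasTemperateGrowth_div_jap), japMul,
    derivCLM_smulLeftCLM_apply (by fun_prop) (hasDerivAt_jap ξ).ofReal_comp]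

lemma L2C_derivCLM_japMul_le (F : 𝓢(ℝ, ℂ)) :
    L2C (derivCLM ℂ ℂ (japMul F)) ≤ L2C (japMul F) + L2C (japMul (derivCLM ℂ ℂ F)) := by
  refine L2C_le_add ((japMul F).memLp 2) ((japMul _).memLp 2) fun ξ => ?_
  rw [derivCLM_japMul, _root_.add_apply,
    smulLeftCLM_apply_eq_mul (hasTemperateGrowth_ofReal hasTemperateGrowth_div_jap)]
  refine (norm_add_le _ _).trans (add_le_add_left ?_ _)
  rw [norm_mul, Complex.norm_real, Real.norm_eq_abs]
  exact (mul_le_of_le_one_left (norm_nonneg _) (abs_div_jap_le_one ξ)).trans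
    (norm_le_norm_japMul F ξ)

lemma L2C_derivCLM_derivCLM_japMul_le (F : 𝓢(ℝ, ℂ)) :
    L2C (derivCLM ℂ ℂ (derivCLM ℂ ℂ (japMul F))) ≤
      L2C (japMul F) + 2 * L2C (japMul (derivCLM ℂ ℂ F)) +
        L2C (japMul (derivCLM ℂ ℂ (derivCLM ℂ ℂ F))) := by
  set F' := derivCLM ℂ ℂ F
  set V := smulLeftCLM ℂ (fun ξ => ((ξ / jap ξ : ℝ) : ℂ)) F
  have hV : L2C (derivCLM ℂ ℂ V) ≤ L2C (japMul F) + L2C (japMul F') := by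
    refine L2C_le_add ((japMul F).memLp 2) ((japMul F').memLp 2) fun ξ => ?_
    rw [derivCLM_smulLeftCLM_apply (hasTemperateGrowth_ofReal hasTemperateGrowth_div_jap)
      (hasDerivAt_div_jap ξ).ofReal_comp]
    refine (norm_add_le _ _).trans (add_le_add ?_ ?_)
    · rw [norm_mul, Complex.norm_real]
      exact (mul_le_of_le_one_left (norm_nonneg _) (abs_inv_jap_pow_three_le_one ξ)).trans
        (norm_le_norm_japMul F ξ)
    · rw [norm_mul, Complex.norm_real]
      exact (mul_le_of_le_one_left (norm_nonneg _) (abs_div_jap_le_one ξ)).trans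
        (norm_le_norm_japMul F' ξ)
  have hsum : L2C (derivCLM ℂ ℂ (derivCLM ℂ ℂ (japMul F))) ≤
      L2C (derivCLM ℂ ℂ V) + L2C (derivCLM ℂ ℂ (japMul F')) :=
    L2C_le_add ((derivCLM ℂ ℂ V).memLp 2) ((derivCLM ℂ ℂ (japMul F')).memLp 2) fun ξ => by
      rw [derivCLM_japMul, map_add, _root_.add_apply]
      exact norm_add_le _ _
  linarith [L2C_derivCLM_japMul_le F']

lemma sobolevNorm_japMul_add_le (F : 𝓢(ℝ, ℂ)) :
    sobolevNorm (japMul F) + sobolevNorm (derivCLM ℂ ℂ (japMul F)) ≤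
      4 * L2C (japMul F) + 4 * L2C (japMul (derivCLM ℂ ℂ F)) +
        L2C (japMul (derivCLM ℂ ℂ (derivCLM ℂ ℂ F))) := by
  rw [sobolevNorm, sobolevNorm]
  linarith [L2C_derivCLM_japMul_le F, L2C_derivCLM_derivCLM_japMul_le F]

lemma smul_derivPropagator (s : ℝ) (F : 𝓢(ℝ, ℂ)) :
    (s : ℂ) • derivPropagator s F =
      derivCLM ℂ ℂ (smulLeftCLM ℂ (osc jap s) (japMul F)) -
        smulLeftCLM ℂ (osc jap s) (derivCLM ℂ ℂ (japMul F)) := by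
  ext ξ
  have hj : (jap ξ : ℂ) ≠ 0 := Complex.ofReal_ne_zero.2 (jap_pos ξ).ne'
  rw [_root_.sub_apply, _root_.smul_apply, smul_eq_mul, derivPropagator,
    smulLeftCLM_apply_eq_mul (hasTemperateGrowth_derivPropagator_symbol s),
    derivCLM_smulLeftCLM_apply (by fun_prop) (hasDerivAt_osc (hasDerivAt_jap ξ) s),
    smulLeftCLM_apply_eq_mul (by fun_prop), japMul_apply]
  push_cast
  field_simp
  ring

lemma inv_one_add_sq_mul_norm_iftCLM_le (X : 𝓢(ℝ, ℂ)) (x : ℝ) :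
    (1 + x ^ 2)⁻¹ * ‖iftCLM X x‖ ≤ ‖weightedIFT X x‖ := by
  rw [norm_weightedIFT_apply, ← jap_sq, ← inv_pow]
  gcongr
  exact pow_le_of_le_one (inv_nonneg.2 (jap_pos x).le) (inv_jap_le_one x) two_ne_zero

lemma inv_one_add_sq_mul_norm_iftCLM_derivCLM_le (X : 𝓢(ℝ, ℂ)) (x : ℝ) :
    (1 + x ^ 2)⁻¹ * ‖iftCLM (derivCLM ℂ ℂ X) x‖ ≤ ‖weightedIFT X x‖ := by
  have hj := jap_pos x
  rw [norm_weightedIFT_apply, ← jap_sq, iftCLM_derivCLM_apply, norm_mul, norm_neg, norm_mul,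
    Complex.norm_I, one_mul, Complex.norm_real, Real.norm_eq_abs, ← mul_assoc]
  gcongr
  rw [inv_mul_le_iff₀ (by positivity), sq, mul_assoc, mul_inv_cancel₀ hj.ne', mul_one]
  exact abs_le_jap x

lemma L2C_derivPropagator_large_time_le {s : ℝ} (hs : 1 ≤ |s|) (F : 𝓢(ℝ, ℂ)) :
    L2C (fun x => (((1 + x ^ 2)⁻¹ : ℝ) : ℂ) * iftCLM (derivPropagator s F) x) ≤
      10 * |s| ^ (-3 / 2 : ℝ) *
        (sobolevNorm (japMul F) + sobolevNorm (derivCLM ℂ ℂ (japMul F))) := by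
  set X := smulLeftCLM ℂ (osc jap s) (japMul F)
  set Y := smulLeftCLM ℂ (osc jap s) (derivCLM ℂ ℂ (japMul F))
  have hs0 : 0 < |s| := zero_lt_one.trans_le hs
  have hift : ∀ x, ‖iftCLM (derivPropagator s F) x‖ ≤
      |s|⁻¹ * (‖iftCLM (derivCLM ℂ ℂ X) x‖ + ‖iftCLM Y x‖) := fun x => by
    rw [le_inv_mul_iff₀ hs0, ← Real.norm_eq_abs, ← Complex.norm_real, ← norm_smul,
      ← _root_.smul_apply, ← map_smul, smul_derivPropagator, map_sub, _root_.sub_apply]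
    exact norm_sub_le _ _
  have hweighted : ∀ x, ‖(((1 + x ^ 2)⁻¹ : ℝ) : ℂ) * iftCLM (derivPropagator s F) x‖ ≤
      |s|⁻¹ * ‖weightedIFT X x‖ + |s|⁻¹ * ‖weightedIFT Y x‖ := fun x => by
    rw [norm_mul, Complex.norm_real, Real.norm_of_nonneg (by positivity), ← mul_add]
    calc _ ≤ (1 + x ^ 2)⁻¹ * (|s|⁻¹ * (‖iftCLM (derivCLM ℂ ℂ X) x‖ + ‖iftCLM Y x‖)) := by
          gcongr
          exact hift x
      _ = |s|⁻¹ * ((1 + x ^ 2)⁻¹ * ‖iftCLM (derivCLM ℂ ℂ X) x‖ +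
            (1 + x ^ 2)⁻¹ * ‖iftCLM Y x‖) := by ring
      _ ≤ _ := by
          gcongr
          exacts [inv_one_add_sq_mul_norm_iftCLM_derivCLM_le X x,
            inv_one_add_sq_mul_norm_iftCLM_le Y x]
  have hrpow : |s| ^ (-3 / 2 : ℝ) = |s|⁻¹ * |s| ^ (-(1 / 2) : ℝ) := by
    rw [← Real.rpow_neg_one, ← Real.rpow_add hs0]
    norm_num
  calc _ ≤ |s|⁻¹ * L2C (weightedIFT X) + |s|⁻¹ * L2C (weightedIFT Y) :=
        L2C_le_mul_add_mul (by positivity) (by positivity) ((weightedIFT X).memLp 2)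
          ((weightedIFT Y).memLp 2) hweighted
    _ ≤ |s|⁻¹ * (10 * |s| ^ (-(1 / 2) : ℝ) * sobolevNorm (japMul F)) +
          |s|⁻¹ * (10 * |s| ^ (-(1 / 2) : ℝ) * sobolevNorm (derivCLM ℂ ℂ (japMul F))) := by
        gcongr <;> exact L2C_weightedIFT_osc_jap_le hs _
    _ = _ := by rw [hrpow]; ring

lemma L2C_derivPropagator_le (s : ℝ) (F : 𝓢(ℝ, ℂ)) :
    L2C (fun x => (((1 + x ^ 2)⁻¹ : ℝ) : ℂ) * iftCLM (derivPropagator s F) x) ≤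
      L2C (japMul F) := by
  calc _ ≤ L2C (iftCLM (derivPropagator s F)) := L2C_mono ((iftCLM _).memLp 2) fun x => by
        rw [norm_mul, Complex.norm_real, Real.norm_of_nonneg (by positivity)]
        exact mul_le_of_le_one_left (norm_nonneg _)
          (inv_le_one_of_one_le₀ (by linarith [sq_nonneg x]))
    _ = L2C (derivPropagator s F) := L2C_iftCLM _
    _ ≤ L2C (japMul F) := L2C_mono ((japMul F).memLp 2) fun ξ => by
        rw [derivPropagator,
          smulLeftCLM_apply_eq_mul (hasTemperateGrowth_derivPropagator_symbol s),
          norm_japMul_apply, norm_mul, norm_mul, norm_mul, norm_osc, mul_one, Complex.norm_I,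
          one_mul, Complex.norm_real]
        gcongr
        exact abs_le_jap ξ

/-! ### Data of the form `ℱ⁻¹(⟨x⟩⁻² p)` -/

lemma L2C_japMul_iftCLM_smulLeftCLM_le {m m' : ℝ → ℂ} (hm : m.HasTemperateGrowth)
    (hderiv : ∀ x, HasDerivAt m (m' x) x) (hle : ∀ x, ‖m x‖ ≤ 1) (hle' : ∀ x, ‖m' x‖ ≤ 1)
    (p : 𝓢(ℝ, ℂ)) : L2C (japMul (iftCLM (smulLeftCLM ℂ m p))) ≤ 2 * sobolevNorm p := by
  refine (L2C_japMul_iftCLM_le _).trans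
    ((sobolevNorm_smulLeftCLM_le hm hderiv hle hle' p).trans_eq ?_)
  norm_num

lemma abs_two_mul_div_one_add_sq_sq_le_one (x : ℝ) : |-(2 * x) / (1 + x ^ 2) ^ 2| ≤ 1 := by
  rw [abs_div, abs_neg, abs_of_pos (by positivity : 0 < (1 + x ^ 2) ^ 2)]
  refine div_le_one_of_le₀ (abs_le.2 ?_) (by positivity)
  constructor <;> nlinarith [sq_nonneg (x + 1), sq_nonneg (x - 1), sq_nonneg (x ^ 2)]

lemma L2C_japMul_iftCLM_weightMul_le (p : 𝓢(ℝ, ℂ)) :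
    L2C (japMul (iftCLM (weightMul p))) ≤ 2 * sobolevNorm p := by
  refine L2C_japMul_iftCLM_smulLeftCLM_le (by fun_prop)
    (fun x => (hasDerivAt_inv_one_add_sq x).ofReal_comp) (fun x => ?_) (fun x => ?_) p
  · rw [Complex.norm_real, Real.norm_of_nonneg (by positivity)]
    exact inv_le_one_of_one_le₀ (by linarith [sq_nonneg x])
  · rw [Complex.norm_real]
    exact abs_two_mul_div_one_add_sq_sq_le_one x

lemma derivCLM_iftCLM_weightMul (p : 𝓢(ℝ, ℂ)) :
    derivCLM ℂ ℂ (iftCLM (weightMul p)) =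
      iftCLM (smulLeftCLM ℂ (fun x => Complex.I * regInv 1 x) p) := by
  rw [derivCLM_iftCLM]
  congr 1
  ext x
  rw [smulLeftCLM_apply_eq_mul (by fun_prop), weightMul_apply, smulLeftCLM_apply_eq_mul ?_, regInv]
  · push_cast
    ring
  · have := hasTemperateGrowth_regInv one_pos
    fun_prop

lemma L2C_japMul_derivCLM_iftCLM_weightMul_le (p : 𝓢(ℝ, ℂ)) :
    L2C (japMul (derivCLM ℂ ℂ (iftCLM (weightMul p)))) ≤ 2 * sobolevNorm p := by
  have hgrowth := hasTemperateGrowth_regInv one_pos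
  rw [derivCLM_iftCLM_weightMul]
  refine L2C_japMul_iftCLM_smulLeftCLM_le (by fun_prop)
    (fun x => (hasDerivAt_regInv one_pos x).ofReal_comp.const_mul Complex.I)
    (fun x => ?_) (fun x => ?_) p
  · rw [norm_mul, Complex.norm_I, one_mul, Complex.norm_real]
    exact (abs_regInv_le one_pos x).trans_eq inv_one
  · rw [norm_mul, Complex.norm_I, one_mul, Complex.norm_real]
    refine (abs_sq_sub_sq_div_le one_pos x).trans (div_le_one_of_le₀ ?_ (by positivity))
    linarith [sq_nonneg x]

lemma derivCLM_derivCLM_iftCLM_weightMul (p : 𝓢(ℝ, ℂ)) :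
    derivCLM ℂ ℂ (derivCLM ℂ ℂ (iftCLM (weightMul p))) =
      iftCLM (smulLeftCLM ℂ (fun x : ℝ => (((1 + x ^ 2)⁻¹ - 1 : ℝ) : ℂ)) p) := by
  rw [derivCLM_iftCLM, derivCLM_iftCLM]
  congr 1
  ext x
  have hx : (1 + (x : ℂ) ^ 2) ≠ 0 := by exact_mod_cast (by positivity : 1 + x ^ 2 ≠ 0)
  rw [smulLeftCLM_apply_eq_mul (by fun_prop), smulLeftCLM_apply_eq_mul (by fun_prop),
    weightMul_apply, smulLeftCLM_apply_eq_mul (by fun_prop)]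
  push_cast
  field_simp
  linear_combination (x : ℂ) ^ 2 * p x * Complex.I_sq

lemma L2C_japMul_derivCLM_derivCLM_iftCLM_weightMul_le (p : 𝓢(ℝ, ℂ)) :
    L2C (japMul (derivCLM ℂ ℂ (derivCLM ℂ ℂ (iftCLM (weightMul p))))) ≤ 2 * sobolevNorm p := by
  rw [derivCLM_derivCLM_iftCLM_weightMul]
  refine L2C_japMul_iftCLM_smulLeftCLM_le (by fun_prop)
    (fun x => ((hasDerivAt_inv_one_add_sq x).sub_const 1).ofReal_comp)
    (fun x => ?_) (fun x => ?_) p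
  · have hpos : 0 < (1 + x ^ 2)⁻¹ := by positivity
    have hle : (1 + x ^ 2)⁻¹ ≤ 1 := inv_le_one_of_one_le₀ (by linarith [sq_nonneg x])
    rw [Complex.norm_real, Real.norm_eq_abs, abs_le]
    constructor <;> linarith
  · rw [Complex.norm_real]
    exact abs_two_mul_div_one_add_sq_sq_le_one x

lemma rpow_neg_three_halves_le {r s : ℝ} (hr : 0 < r) (h : jap s ≤ 2 * r) :
    r ^ (-3 / 2 : ℝ) ≤ 4 * jap s ^ (-3 / 2 : ℝ) := by
  have hmono : (2 * r) ^ (-3 / 2 : ℝ) ≤ jap s ^ (-3 / 2 : ℝ) :=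
    Real.rpow_le_rpow_of_nonpos (jap_pos s) h (by norm_num)
  have htwo : (1 / 4 : ℝ) ≤ 2 ^ (-3 / 2 : ℝ) := calc
    (1 / 4 : ℝ) = 2 ^ (-2 : ℝ) := by norm_num [Real.rpow_neg]
    _ ≤ 2 ^ (-3 / 2 : ℝ) := Real.rpow_le_rpow_of_exponent_le one_le_two (by norm_num)
  rw [Real.mul_rpow zero_le_two hr.le] at hmono
  nlinarith [mul_le_mul_of_nonneg_right htwo (Real.rpow_nonneg hr.le (-3 / 2))]

lemma L2C_derivPropagator_iftCLM_weightMul_le (s : ℝ) (p : 𝓢(ℝ, ℂ)) :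
    L2C (fun x => (((1 + x ^ 2)⁻¹ : ℝ) : ℂ) *
      iftCLM (derivPropagator s (iftCLM (weightMul p))) x) ≤
        720 * jap s ^ (-3 / 2 : ℝ) * sobolevNorm p := by
  set G := iftCLM (weightMul p)
  have hp := sobolevNorm_nonneg p
  have hzero : L2C (japMul G) ≤ 2 * sobolevNorm p := L2C_japMul_iftCLM_weightMul_le p
  rcases le_total |s| 1 with hs | hs
  · have hrate := rpow_neg_three_halves_le (s := s) one_pos
      (by linarith [jap_le_one_add_abs s])
    rw [Real.one_rpow] at hrate
    calc _ ≤ 2 * sobolevNorm p := (L2C_derivPropagator_le s G).trans hzero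
      _ ≤ _ := by nlinarith
  · have hH : sobolevNorm (japMul G) + sobolevNorm (derivCLM ℂ ℂ (japMul G)) ≤
        18 * sobolevNorm p := by
      linarith [sobolevNorm_japMul_add_le G, L2C_japMul_derivCLM_iftCLM_weightMul_le p,
        L2C_japMul_derivCLM_derivCLM_iftCLM_weightMul_le p]
    have hs0 : 0 < |s| := zero_lt_one.trans_le hs
    calc _ ≤ 10 * |s| ^ (-3 / 2 : ℝ) *
          (sobolevNorm (japMul G) + sobolevNorm (derivCLM ℂ ℂ (japMul G))) :=
        L2C_derivPropagator_large_time_le hs G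
      _ ≤ 10 * (4 * jap s ^ (-3 / 2 : ℝ)) * (18 * sobolevNorm p) := by
        have := jap_pos s
        gcongr
        · exact add_nonneg (sobolevNorm_nonneg _) (sobolevNorm_nonneg _)
        · exact rpow_neg_three_halves_le hs0 (by linarith [jap_le_one_add_abs s])
      _ = _ := by ring

/-! ### Multipliers as operators on Schwartz functions -/

/-- The reflection `f ↦ f(-·)`. It relates `FT` to `IFT`. -/
noncomputable def reflect : 𝓢(ℝ, ℂ) →L[ℂ] 𝓢(ℝ, ℂ) :=
  compCLMOfContinuousLinearEquiv ℂ (ContinuousLinearEquiv.neg ℝ)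

lemma reflect_apply (f : 𝓢(ℝ, ℂ)) (x : ℝ) : reflect f x = f (-x) := rfl

lemma reflect_weightMul (f : 𝓢(ℝ, ℂ)) : reflect (weightMul f) = weightMul (reflect f) := by
  ext x
  rw [reflect_apply, weightMul_apply, weightMul_apply, reflect_apply, neg_sq]

lemma derivCLM_reflect_apply (f : 𝓢(ℝ, ℂ)) (x : ℝ) :
    derivCLM ℂ ℂ (reflect f) x = -derivCLM ℂ ℂ f (-x) :=
  ((hasDerivAt_derivCLM f (-x)).scomp x (hasDerivAt_neg x)).deriv.trans (neg_one_smul _ _)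

lemma sobolevNorm_reflect (f : 𝓢(ℝ, ℂ)) : sobolevNorm (reflect f) = sobolevNorm f := by
  have hderiv : L2C (derivCLM ℂ ℂ (reflect f)) = L2C (derivCLM ℂ ℂ f) := by
    rw [← L2C_comp_neg (derivCLM ℂ ℂ f)]
    simp only [L2C, derivCLM_reflect_apply, norm_neg]
  have hzero : L2C (reflect f) = L2C f := L2C_comp_neg f
  rw [sobolevNorm, sobolevNorm, hderiv, hzero]

lemma Mop_eq_iftCLM {m : ℝ → ℂ} (hm : m.HasTemperateGrowth) (f : 𝓢(ℝ, ℂ)) (x : ℝ) :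
    Mop m f x = iftCLM (smulLeftCLM ℂ m (iftCLM (reflect f))) x := by
  rw [iftCLM_apply, Mop]
  congr 1 with ξ
  rw [smulLeftCLM_apply_eq_mul hm, iftCLM_apply, FT_eq_IFT_comp_neg]
  rfl

lemma sobolevNorm_le_two_mul_sqrt (f : 𝓢(ℝ, ℂ)) :
    sobolevNorm f ≤ 2 * √((∫ x, ‖f x‖ ^ 2) + ∫ x, ‖deriv f x‖ ^ 2) := by
  have hf : 0 ≤ ∫ x, ‖f x‖ ^ 2 := integral_nonneg fun x => by positivity
  have hf' : 0 ≤ ∫ x, ‖deriv f x‖ ^ 2 := integral_nonneg fun x => by positivity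
  have h0 : L2C f ≤ _ := Real.sqrt_le_sqrt (le_add_of_nonneg_right hf')
  have h1 : L2C (derivCLM ℂ ℂ f) ≤ _ := Real.sqrt_le_sqrt (le_add_of_nonneg_left hf)
  rw [sobolevNorm, two_mul]
  exact add_le_add h0 h1

end KleinGordon

open KleinGordon

/-- Pointwise-in-time local decay with one derivative, `H¹ → L²`:
`‖⟨·⟩^{-2} ∂_x e^{±it⟨∇⟩} (⟨·⟩^{-2} f)‖_{L²} ≤ C ⟨t⟩^{-3/2} (‖f‖_{L²}² + ‖f'‖_{L²}²)^{1/2}`. -/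
theorem local_decay_klein_gordon_derivative_H1 :
    ∃ C : ℝ, 1 ≤ C ∧
      ∀ σ : ℝ, (σ = 1 ∨ σ = -1) → ∀ (t : ℝ) (f : SchwartzMap ℝ ℂ),
        L2C (fun x => ((jap x ^ (-(2 : ℝ)) : ℝ) : ℂ) *
            Mop (fun ξ => Complex.I * (ξ : ℂ) *
                Complex.exp (Complex.I * (σ : ℂ) * (t : ℂ) * (jap ξ : ℂ)))
              (fun z => ((jap z ^ (-(2 : ℝ)) : ℝ) : ℂ) * f z) x)
          ≤ C * jap t ^ (-(3 : ℝ) / 2) *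
              Real.sqrt ((∫ x : ℝ, ‖f x‖ ^ 2) + ∫ x : ℝ, ‖deriv (fun z => f z) x‖ ^ 2) := by
  refine ⟨1440, by norm_num, fun σ hσ t f => ?_⟩
  have hjap : jap (σ * t) = jap t := by rcases hσ with rfl | rfl <;> simp [jap]
  have hsymbol : (fun ξ : ℝ => Complex.I * ξ * Complex.exp (Complex.I * σ * t * jap ξ)) =
      fun ξ => Complex.I * ξ * osc jap (σ * t) ξ := by
    ext ξ
    rw [osc, Complex.ofReal_mul, ← mul_assoc Complex.I]
  have hdata : (fun z => ((jap z ^ (-(2 : ℝ)) : ℝ) : ℂ) * f z) = weightMul f := by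
    ext z
    rw [weightMul_apply, jap_rpow_neg_two]
  rw [hsymbol, hdata]
  simp only [jap_rpow_neg_two,
    Mop_eq_iftCLM (hasTemperateGrowth_derivPropagator_symbol _), reflect_weightMul]
  calc _ ≤ 720 * jap (σ * t) ^ (-3 / 2 : ℝ) * sobolevNorm (reflect f) :=
        L2C_derivPropagator_iftCLM_weightMul_le (σ * t) (reflect f)
    _ ≤ 720 * jap t ^ (-3 / 2 : ℝ) *
          (2 * √((∫ x, ‖f x‖ ^ 2) + ∫ x, ‖deriv f x‖ ^ 2)) := by
        rw [hjap, sobolevNorm_reflect]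
        have := jap_pos t
        gcongr
        exact sobolevNorm_le_two_mul_sqrt f
    _ = _ := by ring
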